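/- Let R be a polynomial ring over an algebraically closed field K. Let I be an ideal generated by n ≥ 3 quadrics represented by minors by the 2×(n+1) matrix M = [[x, 0, a_{12}, a_{13}, …, a_{1n}], [y, a_{21}, 0, a_{23}, …, a_{2n}]], where all entries are linear forms or zero, x, y are linearly independent linear forms, and the submatrix D = [[x, a_{13}, …, a_{1n}], [y, a_{23}, …, a_{2n}]] obtained by deleting the second and third columns is 1-generic. Then pd(R/I) ≤ 2n − 2. -/

import Mathlib

open MvPolynomial Filter

universe u

/-- `PdLE R n M` means the `R`-module `M` has projective dimension at most `n`:
either `M` is projective (`n = 0`), or `M` is a quotient of a free module by a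
submodule of projective dimension at most `n - 1`. -/
def PdLE (R : Type u) [CommRing R] : ℕ → (M : Type u) → [AddCommGroup M] → [Module R M] → Prop
  | 0, M, _, _ => Module.Projective R M
  | n + 1, M, _, _ => ∃ (F : Type u) (_ : AddCommGroup F) (_ : Module R F),
      Module.Free R F ∧ ∃ f : F →ₗ[R] M, Function.Surjective f ∧ PdLE R n (LinearMap.ker f)

/-- The projective dimension of an `R`-module `M`, as an element of `ℕ∞`
(`⊤` if `M` has no finite free resolution). -/
noncomputable def projDim (R : Type u) [CommRing R] (M : Type u) [AddCommGroup M]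
    [Module R M] : ℕ∞ :=
  sInf ((fun n : ℕ => (n : ℕ∞)) '' {n : ℕ | PdLE R n M})

/-- The height of an ideal: the infimum of the heights of the prime ideals containing it. -/
noncomputable def idealHeight {R : Type*} [CommRing R] (I : Ideal R) : ℕ∞ :=
  ⨅ p ∈ {p : PrimeSpectrum R | I ≤ p.asIdeal}, Order.height p

/-- The length of a module, defined as the Krull dimension of its lattice of submodules. -/
noncomputable def moduleLength (R : Type u) [CommRing R] (M : Type u) [AddCommGroup M]
    [Module R M] : WithBot ℕ∞ :=
  Order.krullDim (Submodule R M)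

/-- `IsHSMultiplicity R mx I e` asserts that the Hilbert–Samuel multiplicity of `R/I`
with respect to the ideal `mx` equals `e`: for `d = dim R/I` there is a polynomial `P`
of degree `d` with `e = d! · (leading coefficient of P)` such that
`length (R/(I + mx^n)) = P(n)` for all large `n`. -/
def IsHSMultiplicity (R : Type u) [CommRing R] (mx I : Ideal R) (e : ℕ) : Prop :=
  ∃ (d : ℕ) (P : Polynomial ℚ),
    ringKrullDim (R ⧸ I) = (d : WithBot ℕ∞) ∧
    P.natDegree = d ∧
    (e : ℚ) = P.leadingCoeff * d.factorial ∧
    ∀ᶠ n : ℕ in Filter.atTop, ∃ k : ℕ, (k : ℚ) = P.eval (n : ℚ) ∧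
      moduleLength R (R ⧸ (I ⊔ mx ^ n)) = ((k : ℕ∞) : WithBot ℕ∞)

/-- A matrix over a `K`-algebra is `1`-generic if it has no generalized zero entry:
for every nonzero vectors `u`, `v` of scalars, `uᵀ M v ≠ 0`. -/
def OneGeneric (K : Type*) [Field K] {R : Type u} [CommRing R] [Algebra K R]
    {m l : ℕ} (M : Matrix (Fin m) (Fin l) R) : Prop :=
  ∀ (u : Fin m → K) (v : Fin l → K), u ≠ 0 → v ≠ 0 →
    ∑ i, ∑ j, algebraMap K R (u i * v j) * M i j ≠ 0

/-- The ideal of all `2 × 2` minors of a `2 × l` matrix. -/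
def minors2 {R : Type u} [CommRing R] {l : ℕ} (M : Matrix (Fin 2) (Fin l) R) : Ideal R :=
  Ideal.span (Set.range fun p : Fin l × Fin l => M 0 p.1 * M 1 p.2 - M 0 p.2 * M 1 p.1)

/-- The homogeneous maximal ideal of a polynomial ring. -/
noncomputable def maxIdeal (K : Type*) [Field K] (σ : Type*) : Ideal (MvPolynomial σ K) :=
  Ideal.span (Set.range (X : σ → MvPolynomial σ K))

/-- The ideal represented by minors by the `2 × (n+1)` matrix with first column `(x, y)ᵀ`
and remaining columns `(u j, v j)ᵀ`: it is generated by the `2 × 2` minors involving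
the first column. -/
def repByMinors {R : Type u} [CommRing R] {n : ℕ} (x y : R) (u v : Fin n → R) : Ideal R :=
  Ideal.span (Set.range fun j : Fin n => x * v j - y * u j)

/-! Let `D` be the given `1`-generic matrix, `p = a₁₂`, `q = a₂₁`, and break up `R/I` by the exact
sequence `0 → R/(I : x) → R/I → R/(I + (x)) → 0`. Here `I + (x) = (x) + y (p, x, a₁₃, …, a₁ₙ)`, and
the syzygies of the linear forms in the first row identify `I : x` with the sum of `(q)` and the
`2 × 2` minors of `D`, enlarged by one form of the second row if `p` is in the span of the first row
and by the column `(p, 0)ᵀ` otherwise.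

If `q` is not in the span of the entries of `D`, then `P = I₂(D) + (q)` is prime and `I : x` is
either `P` plus a principal ideal or `P + p (q, y, a₂₃, …, a₂ₙ)`. For a prime `P ⊆ L` and `f ∉ P`,
multiplication by `f` bounds the projective dimension of `R/(P + f L)` by those of `R/P` and `R/L`;
the same principle together with a linkage `P + g J = P + f L` bounds that of `R/I₂(D)` column by
column. The case of `p` is symmetric. If both `p` and `q` are in the span of the entries of `D`,
then `I` is extended from a polynomial ring in at most `2n - 2` variables and Hilbert's syzygy
theorem applies.

Primality of `I₂(D)` comes from the pencil `D₁ - T D₀` of the rows of `D`: over `K(T)` it generates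
a prime ideal of linear forms, whose contraction to `R` is `I₂(D)`. The denominators split into
linear factors `T - l`, which are nonzerodivisors modulo the ideal of the pencil because the entries
of `D₁ - l D₀` are linearly independent. -/

section ProjectiveDimension

open CategoryTheory

variable {R : Type u} [CommRing R] {n : ℕ}

section Modules

variable {M M₁ M₂ M₃ : Type u} [AddCommGroup M] [Module R M] [AddCommGroup M₁] [Module R M₁]
  [AddCommGroup M₂] [Module R M₂] [AddCommGroup M₃] [Module R M₃]

theorem pdLE_iff_hasProjectiveDimensionLE :
    PdLE R n M ↔ HasProjectiveDimensionLE (ModuleCat.of R M) n := by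
  induction n generalizing M with
  | zero =>
    rw [← projective_iff_hasProjectiveDimensionLE_zero, ← IsProjective.iff_projective]
    rfl
  | succ n ih =>
    have hsyzygy {F : Type u} [AddCommGroup F] [Module R F] [Module.Free R F] {f : F →ₗ[R] M}
        (hf : Function.Surjective f) :
        HasProjectiveDimensionLE (ModuleCat.of R M) (n + 1) ↔ PdLE R n (LinearMap.ker f) :=
      ((LinearMap.shortExact_shortComplexKer hf).hasProjectiveDimensionLT_X₃_iff n
        ((IsProjective.iff_projective F).1 inferInstance)).trans ih.symm
    constructor
    · rintro ⟨F, _, _, _, f, hf, hker⟩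
      exact (hsyzygy hf).2 hker
    · intro h
      have hf : Function.Surjective (Finsupp.linearCombination R (id : M → M)) :=
        Finsupp.linearCombination_id_surjective R M
      exact ⟨M →₀ R, inferInstance, inferInstance, inferInstance, _, hf, (hsyzygy hf).1 h⟩

theorem projDim_le_of_pdLE (h : PdLE R n M) : projDim R M ≤ n :=
  sInf_le ⟨n, h, rfl⟩

theorem PdLE.mono {m : ℕ} (h : PdLE R m M) (hmn : m ≤ n) : PdLE R n M := by
  rw [pdLE_iff_hasProjectiveDimensionLE] at h ⊢
  exact hasProjectiveDimensionLT_of_ge _ (m + 1) (n + 1) (by lia)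

theorem PdLE.of_linearEquiv (h : PdLE R n M₁) (e : M₁ ≃ₗ[R] M₂) : PdLE R n M₂ := by
  rw [pdLE_iff_hasProjectiveDimensionLE] at h ⊢
  exact ModuleCat.hasProjectiveDimensionLE_of_linearEquiv (M := ModuleCat.of R M₁)
    (N := ModuleCat.of R M₂) e n

variable {f : M₁ →ₗ[R] M₂} {g : M₂ →ₗ[R] M₃} (hf : Function.Injective f)
  (hg : Function.Surjective g) (hfg : Function.Exact f g)

include hf hg hfg

theorem exists_shortExact_of_exact :
    ∃ w, (ShortComplex.mk (ModuleCat.ofHom f) (ModuleCat.ofHom g) w).ShortExact :=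
  ⟨by ext x; exact hfg.apply_apply_eq_zero x,
    .mk' ((ShortComplex.ShortExact.moduleCat_exact_iff_function_exact _).2 hfg)
      ((ModuleCat.mono_iff_injective _).2 hf) ((ModuleCat.epi_iff_surjective _).2 hg)⟩

theorem PdLE.middle_of_exact (h₁ : PdLE R n M₁) (h₃ : PdLE R n M₃) : PdLE R n M₂ := by
  obtain ⟨w, hS⟩ := exists_shortExact_of_exact hf hg hfg
  rw [pdLE_iff_hasProjectiveDimensionLE] at h₁ h₃ ⊢
  exact hS.hasProjectiveDimensionLT_X₂ (n + 1) h₁ h₃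

theorem PdLE.left_of_exact (h₂ : PdLE R n M₂) (h₃ : PdLE R (n + 1) M₃) : PdLE R n M₁ := by
  obtain ⟨w, hS⟩ := exists_shortExact_of_exact hf hg hfg
  rw [pdLE_iff_hasProjectiveDimensionLE] at h₂ h₃ ⊢
  exact hS.hasProjectiveDimensionLT_X₁ (n + 1) h₂ h₃

theorem PdLE.right_of_exact (h₁ : PdLE R n M₁) (h₂ : PdLE R (n + 1) M₂) :
    PdLE R (n + 1) M₃ := by
  obtain ⟨w, hS⟩ := exists_shortExact_of_exact hf hg hfg
  rw [pdLE_iff_hasProjectiveDimensionLE] at h₁ h₂ ⊢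
  exact hS.hasProjectiveDimensionLT_X₃ (n + 1) h₁ h₂

end Modules

section CyclicModules

variable {J J' : Ideal R} {f : R} (hJ' : ∀ g, g ∈ J' ↔ f * g ∈ J)

theorem pdLE_quotient_bot : PdLE R 0 (R ⧸ (⊥ : Ideal R)) :=
  Module.Projective.of_equiv (Submodule.quotEquivOfEqBot (⊥ : Submodule R R) rfl).symm

/-- Multiplication by `f`, as a map `R ⧸ J' → R ⧸ J` where `J'` is the colon ideal `J : f`. -/
def colonMap : (R ⧸ J') →ₗ[R] (R ⧸ J) :=
  Submodule.mapQ J' J (LinearMap.mulLeft R f) fun g hg => (hJ' g).1 hg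

theorem colonMap_mk (g : R) :
    colonMap hJ' (Submodule.Quotient.mk g) = Submodule.Quotient.mk (f * g) := rfl

theorem colonMap_injective : Function.Injective (colonMap hJ') := by
  rw [injective_iff_map_eq_zero]
  intro g hg
  obtain ⟨g, rfl⟩ := Submodule.Quotient.mk_surjective _ g
  rw [colonMap_mk, Submodule.Quotient.mk_eq_zero] at hg
  exact (Submodule.Quotient.mk_eq_zero _).2 ((hJ' g).2 hg)

theorem exact_colonMap_factor : Function.Exact (colonMap hJ')
    (Submodule.factor (le_sup_left : J ≤ J ⊔ Ideal.span {f})) := by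
  intro a
  obtain ⟨a, rfl⟩ := Submodule.mkQ_surjective _ a
  rw [Submodule.factor_mk, Submodule.mkQ_apply, Submodule.mkQ_apply,
    Submodule.Quotient.mk_eq_zero, sup_comm, Ideal.mem_span_singleton_sup]
  constructor
  · rintro ⟨c, b, hb, rfl⟩
    refine ⟨Submodule.Quotient.mk c, ?_⟩
    rw [colonMap_mk, Submodule.Quotient.eq, mul_comm c f, sub_add_cancel_left]
    exact J.neg_mem hb
  · rintro ⟨c, hc⟩
    obtain ⟨c, rfl⟩ := Submodule.Quotient.mk_surjective _ c
    rw [colonMap_mk, Submodule.Quotient.eq] at hc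
    exact ⟨c, a - f * c, neg_sub (f * c) a ▸ J.neg_mem hc, by ring⟩

include hJ'

theorem PdLE.quotient_of_colon (h' : PdLE R n (R ⧸ J'))
    (h : PdLE R n (R ⧸ (J ⊔ Ideal.span {f}))) : PdLE R n (R ⧸ J) :=
  h'.middle_of_exact (colonMap_injective hJ') (Submodule.factor_surjective _)
    (exact_colonMap_factor hJ') h

theorem PdLE.colon (h : PdLE R n (R ⧸ J)) (h' : PdLE R (n + 1) (R ⧸ (J ⊔ Ideal.span {f}))) :
    PdLE R n (R ⧸ J') :=
  h.left_of_exact (colonMap_injective hJ') (Submodule.factor_surjective _)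
    (exact_colonMap_factor hJ') h'

theorem PdLE.sup_span_singleton_of_colon (h' : PdLE R n (R ⧸ J'))
    (h : PdLE R (n + 1) (R ⧸ J)) : PdLE R (n + 1) (R ⧸ (J ⊔ Ideal.span {f})) :=
  h'.right_of_exact (colonMap_injective hJ') (Submodule.factor_surjective _)
    (exact_colonMap_factor hJ') h

end CyclicModules

section Linkage

variable {P L : Ideal R} [hP : P.IsPrime] {q : R}

theorem PdLE.sup_span_singleton (h : PdLE R n (R ⧸ P)) (q : R) :
    PdLE R (n + 1) (R ⧸ (P ⊔ Ideal.span {q})) := by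
  by_cases hq : q ∈ P
  · rw [sup_eq_left.2 ((Ideal.span_singleton_le_iff_mem P).2 hq)]
    exact h.mono n.le_succ
  · exact h.sup_span_singleton_of_colon
      (fun g => ⟨fun hg => P.mul_mem_left _ hg, fun hg => (hP.mem_or_mem hg).resolve_left hq⟩)
      (h.mono n.le_succ)

theorem mem_iff_mul_mem_sup_span_singleton_mul (hPL : P ≤ L) (hq : q ∉ P) (g : R) :
    g ∈ L ↔ q * g ∈ P ⊔ Ideal.span {q} * L := by
  constructor
  · exact fun hg => Ideal.mem_sup_right (Ideal.mem_span_singleton_mul.2 ⟨g, hg, rfl⟩)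
  · intro h
    obtain ⟨p, hp, z, hz, hpz⟩ := Submodule.mem_sup.1 h
    obtain ⟨l, hl, rfl⟩ := Ideal.mem_span_singleton_mul.1 hz
    have hgl : q * (g - l) ∈ P := by rwa [mul_sub, ← hpz, add_sub_cancel_right]
    exact sub_add_cancel g l ▸ add_mem (hPL ((hP.mem_or_mem hgl).resolve_left hq)) hl

omit hP in
theorem sup_span_singleton_mul_sup_span_singleton :
    P ⊔ Ideal.span {q} * L ⊔ Ideal.span {q} = P ⊔ Ideal.span {q} := by
  rw [sup_assoc, sup_eq_right.2 (Ideal.mul_le_left : Ideal.span {q} * L ≤ Ideal.span {q})]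

theorem PdLE.sup_span_singleton_mul (hPL : P ≤ L) (hq : q ∉ P)
    (hP' : PdLE R n (R ⧸ P)) (hL : PdLE R (n + 1) (R ⧸ L)) :
    PdLE R (n + 1) (R ⧸ (P ⊔ Ideal.span {q} * L)) := by
  refine hL.quotient_of_colon (mem_iff_mul_mem_sup_span_singleton_mul hPL hq) ?_
  rw [sup_span_singleton_mul_sup_span_singleton]
  exact hP'.sup_span_singleton q

theorem PdLE.of_linkage {J : Ideal R} {x : R} (hPJ : P ≤ J) (hPL : P ≤ L) (hx : x ∉ P)
    (hq : q ∉ P) (h : P ⊔ Ideal.span {x} * J = P ⊔ Ideal.span {q} * L)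
    (hP' : PdLE R n (R ⧸ P)) (hL : PdLE R (n + 1) (R ⧸ L)) : PdLE R (n + 1) (R ⧸ J) := by
  have hqL := PdLE.sup_span_singleton_mul hPL hq hP' hL
  rw [← h] at hqL
  refine hqL.colon (mem_iff_mul_mem_sup_span_singleton_mul hPJ hx) ?_
  rw [sup_span_singleton_mul_sup_span_singleton]
  exact (hP'.sup_span_singleton x).mono (n + 1).le_succ

omit hP in
theorem sup_span_singleton_mul_span_range_le {ι : Type*} {f g : ι → R} {x : R}
    (h : ∀ j, x * f j - q * g j ∈ P) :
    P ⊔ Ideal.span {x} * Ideal.span (Set.range f) ≤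
      P ⊔ Ideal.span {q} * Ideal.span (Set.range g) := by
  have hmem (j : ι) : x * f j ∈ P ⊔ Ideal.span {q} * Ideal.span (Set.range g) := by
    rw [← sub_add_cancel (x * f j) (q * g j)]
    exact add_mem (Ideal.mem_sup_left (h j)) (Ideal.mem_sup_right (Ideal.mul_mem_mul
      (Ideal.mem_span_singleton_self q) (Ideal.subset_span (Set.mem_range_self j))))
  refine sup_le le_sup_left ?_
  rw [Ideal.span_mul_span', Set.singleton_mul, ← Set.range_comp, Ideal.span_le]
  exact Set.range_subset_iff.2 hmem

theorem PdLE.sup_span_range_of_linkage {ι : Type*} {f g : ι → R} {x : R} (hx : x ∉ P)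
    (h : ∀ j, x * f j - q * g j ∈ P) (hP' : PdLE R n (R ⧸ P))
    (hPg : P ≤ Ideal.span (Set.range g)) (hg : PdLE R (n + 1) (R ⧸ Ideal.span (Set.range g))) :
    PdLE R (n + 1) (R ⧸ (P ⊔ Ideal.span (Set.range f))) := by
  by_cases hq : q ∈ P
  · have hf : Ideal.span (Set.range f) ≤ P := Ideal.span_le.2 <| Set.range_subset_iff.2 fun j =>
      (hP.mem_or_mem ((P.sub_mem_iff_left (P.mul_mem_right _ hq)).1 (h j))).resolve_left hx
    rw [sup_eq_left.2 hf]
    exact hP'.mono n.le_succ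
  · refine PdLE.of_linkage le_sup_left hPg hx hq ?_ hP' hg
    rw [Ideal.mul_sup, ← sup_assoc, sup_eq_left.2 (Ideal.mul_le_right : _ * P ≤ P)]
    exact le_antisymm (sup_span_singleton_mul_span_range_le h)
      (sup_span_singleton_mul_span_range_le fun j => by
        rw [← neg_sub, neg_mem_iff]
        exact h j)

end Linkage

end ProjectiveDimension

section GlobalDimension

open CategoryTheory TensorProduct
open scoped Polynomial

/-- The global dimension of `A` is at most `n`. Only modules in the universe of `A` are
considered, as in `PdLE`. -/
def GlobalDimLE (A : Type u) [CommRing A] (n : ℕ) : Prop :=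
  ∀ (M : Type u) [AddCommGroup M] [Module A M], PdLE A n M

variable {A B : Type u} [CommRing A] [CommRing B] {n : ℕ}

theorem PdLE.baseChange [Algebra A B] [Module.Flat A B] {M : Type u} [AddCommGroup M]
    [Module A M] (h : PdLE A n M) : PdLE B n (B ⊗[A] M) := by
  induction n generalizing M with
  | zero =>
    have : Module.Projective A M := h
    exact (inferInstance : Module.Projective B (B ⊗[A] M))
  | succ n ih =>
    obtain ⟨F, _, _, _, f, hf, hker⟩ := h
    have hfree : PdLE B 0 (B ⊗[A] F) := (inferInstance : Module.Projective B (B ⊗[A] F))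
    exact (ih hker).right_of_exact (f := (LinearMap.ker f).subtype.baseChange B)
      (g := f.baseChange B)
      (Module.Flat.lTensor_preserves_injective_linearMap _ (Submodule.injective_subtype _))
      (LinearMap.lTensor_surjective B hf) (lTensor_exact B (LinearMap.exact_subtype_ker_map f) hf)
      (hfree.mono (n + 1).zero_le)

theorem GlobalDimLE.of_ringEquiv (e : A ≃+* B) (h : GlobalDimLE A n) : GlobalDimLE B n := by
  intro M _ _
  let : Module A M := Module.compHom M e.toRingHom
  let := RingHomInvPair.of_ringEquiv e
  let := RingHomInvPair.symm (RingHomClass.toRingHom e) (RingHomClass.toRingHom e.symm)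
  have := pdLE_iff_hasProjectiveDimensionLE.1 (h M)
  rw [pdLE_iff_hasProjectiveDimensionLE]
  refine ModuleCat.hasProjectiveDimensionLE_of_semiLinearEquiv e (M := ModuleCat.of A M)
    (N := ModuleCat.of B M) ?_ n
  exact { AddEquiv.refl M with map_smul' := fun _ _ => rfl }

theorem GlobalDimLE.of_isField (hA : IsField A) : GlobalDimLE A 0 := by
  intro M _ _
  let := hA.toField
  exact (inferInstance : Module.Projective A M)

section Polynomial

variable (A) (M : Type*) [AddCommGroup M] [Module A M] [Module A[X] M] [IsScalarTower A A[X] M]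

/-- The differential `X ⊗ 1 - 1 ⊗ X` of the resolution
`0 → A[X] ⊗ M → A[X] ⊗ M → M → 0` of an `A[X]`-module `M`. -/
noncomputable def polynomialDifferential : A[X] ⊗[A] M →ₗ[A[X]] A[X] ⊗[A] M :=
  LinearMap.lsmul A[X] _ Polynomial.X -
    (Module.toModuleEnd A M (Polynomial.X : A[X])).baseChange A[X]

/-- The augmentation `b ⊗ m ↦ b • m` of the resolution
`0 → A[X] ⊗ M → A[X] ⊗ M → M → 0` of an `A[X]`-module `M`. -/
noncomputable def polynomialAugmentation : A[X] ⊗[A] M →ₗ[A[X]] M :=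
  LinearMap.liftBaseChange A[X] LinearMap.id

variable {A M}

theorem polynomialDifferential_tmul (b : A[X]) (m : M) :
    polynomialDifferential A M (b ⊗ₜ m) =
      (Polynomial.X * b) ⊗ₜ m - b ⊗ₜ ((Polynomial.X : A[X]) • m) := by
  simp [polynomialDifferential, TensorProduct.smul_tmul']

theorem polynomialAugmentation_tmul (b : A[X]) (m : M) :
    polynomialAugmentation A M (b ⊗ₜ m) = b • m := by
  simp [polynomialAugmentation]

theorem polynomialAugmentation_surjective : Function.Surjective (polynomialAugmentation A M) :=
  fun m => ⟨1 ⊗ₜ m, by rw [polynomialAugmentation_tmul, one_smul]⟩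

variable (A M) in
omit [Module A[X] M] [IsScalarTower A A[X] M] in
/-- The coefficients of an element of `A[X] ⊗ M`, regarded as a polynomial over `M`. -/
noncomputable def tensorCoeff : A[X] ⊗[A] M ≃ₗ[A] ℕ →₀ M :=
  ((PolynomialModule.polynomialTensorProductLEquivPolynomialModule A M).restrictScalars A).trans
    (PolynomialModule.coeffLinearEquiv A A)

omit [Module A[X] M] [IsScalarTower A A[X] M] in
theorem tensorCoeff_tmul (b : A[X]) (m : M) (n : ℕ) :
    tensorCoeff A M (b ⊗ₜ m) n = b.coeff n • m := by
  have hsmul : PolynomialModule.polynomialTensorProductLEquivPolynomialModule A M (b ⊗ₜ m) =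
      b • PolynomialModule.single A 0 m :=
    LinearMap.liftBaseChange_tmul _ _ _ _
  change (PolynomialModule.polynomialTensorProductLEquivPolynomialModule A M (b ⊗ₜ m)).coeff n = _
  rw [hsmul, PolynomialModule.smul_single_apply, if_pos n.zero_le, Nat.sub_zero]

theorem tensorCoeff_succ_polynomialDifferential (t : A[X] ⊗[A] M) (n : ℕ) :
    tensorCoeff A M (polynomialDifferential A M t) (n + 1) =
      tensorCoeff A M t n - (Polynomial.X : A[X]) • tensorCoeff A M t (n + 1) := by
  induction t using TensorProduct.induction_on with
  | zero => simp
  | tmul b m =>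
    rw [polynomialDifferential_tmul, map_sub, Finsupp.sub_apply]
    simp only [tensorCoeff_tmul, Polynomial.coeff_X_mul]
    rw [smul_comm]
  | add s t hs ht =>
    simp only [map_add, Finsupp.add_apply, hs, ht, smul_add]
    abel

theorem polynomialDifferential_injective : Function.Injective (polynomialDifferential A M) := by
  rw [injective_iff_map_eq_zero]
  intro t ht
  have hrec (n : ℕ) : tensorCoeff A M t n = (Polynomial.X : A[X]) • tensorCoeff A M t (n + 1) := by
    have := tensorCoeff_succ_polynomialDifferential t n
    rwa [ht, map_zero, Finsupp.zero_apply, eq_comm, sub_eq_zero] at this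
  obtain ⟨d, hd⟩ : ∃ d, ∀ n ≥ d, tensorCoeff A M t n = 0 :=
    eventually_atTop.1 (Nat.cofinite_eq_atTop ▸ (tensorCoeff A M t).hasFiniteSupport)
  rw [← (tensorCoeff A M).map_eq_zero_iff]
  refine Finsupp.ext fun n => ?_
  rw [Finsupp.zero_apply]
  rcases le_total d n with h | h
  · exact hd n h
  · induction h using Nat.decreasingInduction with
    | self => exact hd d le_rfl
    | of_succ k _ ih => rw [hrec, ih, smul_zero]

theorem tmul_sub_one_tmul_mem_range_polynomialDifferential (b : A[X]) (m : M) :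
    b ⊗ₜ m - 1 ⊗ₜ (b • m) ∈ LinearMap.range (polynomialDifferential A M) := by
  induction b using Polynomial.induction_on generalizing m with
  | C a =>
    rw [← mul_one (Polynomial.C a), ← Polynomial.smul_eq_C_mul, TensorProduct.smul_tmul,
      smul_one_smul, sub_self]
    exact zero_mem _
  | add p q hp hq =>
    rw [TensorProduct.add_tmul, add_smul, TensorProduct.tmul_add, add_sub_add_comm]
    exact add_mem (hp m) (hq m)
  | monomial k a ih =>
    have h := add_mem (LinearMap.mem_range_self (polynomialDifferential A M)
      ((Polynomial.C a * Polynomial.X ^ k) ⊗ₜ m)) (ih ((Polynomial.X : A[X]) • m))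
    rwa [polynomialDifferential_tmul, sub_add_sub_cancel, ← mul_smul, mul_left_comm, ← pow_succ',
      mul_assoc, ← pow_succ] at h

theorem exact_polynomialDifferential_polynomialAugmentation :
    Function.Exact (polynomialDifferential A M) (polynomialAugmentation A M) := by
  have hcomp : polynomialAugmentation A M ∘ₗ polynomialDifferential A M = 0 := by
    ext m
    simp [polynomialDifferential_tmul, polynomialAugmentation_tmul]
  have hmem (t : A[X] ⊗[A] M) :
      t - 1 ⊗ₜ polynomialAugmentation A M t ∈ LinearMap.range (polynomialDifferential A M) := by
    induction t using TensorProduct.induction_on with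
    | zero => simp
    | tmul b m =>
      rw [polynomialAugmentation_tmul]
      exact tmul_sub_one_tmul_mem_range_polynomialDifferential b m
    | add s t hs ht =>
      rw [map_add, TensorProduct.tmul_add, add_sub_add_comm]
      exact add_mem hs ht
  intro t
  constructor
  · intro ht
    simpa [ht] using hmem t
  · rintro ⟨s, rfl⟩
    exact LinearMap.congr_fun hcomp s

end Polynomial

theorem GlobalDimLE.polynomial (h : GlobalDimLE A n) : GlobalDimLE A[X] (n + 1) := by
  intro M _ _
  let : Module A M := Module.compHom M (Polynomial.C : A →+* A[X])
  have : IsScalarTower A A[X] M := .of_algebraMap_smul fun _ _ => rfl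
  have hM : PdLE A[X] n (A[X] ⊗[A] M) := (h M).baseChange
  exact hM.right_of_exact polynomialDifferential_injective polynomialAugmentation_surjective
    exact_polynomialDifferential_polynomialAugmentation (hM.mono n.le_succ)

theorem globalDimLE_mvPolynomial (K ι : Type*) [Field K] [Finite ι] :
    GlobalDimLE (MvPolynomial ι K) (Nat.card ι) := by
  induction ι using Finite.induction_empty_option with
  | of_equiv e h =>
    rw [← Nat.card_congr e]
    exact h.of_ringEquiv (renameEquiv K e).toRingEquiv
  | h_empty =>
    rw [Nat.card_of_isEmpty]
    exact .of_isField ((isEmptyRingEquiv K PEmpty).toMulEquiv.isField (Field.toIsField K))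
  | h_option h =>
    rw [Finite.card_option]
    exact h.polynomial.of_ringEquiv (optionEquivLeft K _).symm.toRingEquiv

theorem GlobalDimLE.pdLE_quotient_map (hA : GlobalDimLE A n) {φ : A →+* B} (hφ : φ.Flat)
    (J : Ideal A) : PdLE B n (B ⧸ J.map φ) := by
  let := φ.toAlgebra
  have : Module.Flat A B := hφ
  exact (hA (A ⧸ J)).baseChange.of_linearEquiv (Ideal.qoutMapEquivTensorQout B (I := J)).symm

end GlobalDimension

section KoszulSyzygies

open scoped Matrix

/-- A tuple `a` has Koszul syzygies when every linear relation `∑ gᵢ aᵢ = 0` is a combination of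
the trivial relations `aⱼ aᵢ - aᵢ aⱼ = 0`, that is, when the first Koszul homology of `a`
vanishes. Alternating matrices are written as `B - Bᵀ` so that the definition is also correct in
characteristic `2`. -/
def HasKoszulSyzygies {R ι : Type*} [CommRing R] [Fintype ι] (a : ι → R) : Prop :=
  ∀ g : ι → R, g ⬝ᵥ a = 0 → ∃ B : Matrix ι ι R, g = (B - Bᵀ) *ᵥ a

section Alternating

variable {R ι : Type*} [CommRing R] [Fintype ι] (B : Matrix ι ι R) (a b : ι → R)

theorem alternating_mulVec_dotProduct_self : ((B - Bᵀ) *ᵥ a) ⬝ᵥ a = 0 := by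
  rw [Matrix.sub_mulVec, sub_dotProduct, Matrix.mulVec_transpose, ← Matrix.dotProduct_mulVec,
    dotProduct_comm, sub_self]

theorem alternating_mulVec_dotProduct_comm :
    ((B - Bᵀ) *ᵥ a) ⬝ᵥ b = -(((B - Bᵀ) *ᵥ b) ⬝ᵥ a) := by
  have h := alternating_mulVec_dotProduct_self B (a + b)
  simp only [Matrix.mulVec_add, add_dotProduct, dotProduct_add,
    alternating_mulVec_dotProduct_self, zero_add, add_zero] at h
  exact eq_neg_of_add_eq_zero_right h

end Alternating

theorem HasKoszulSyzygies.of_tail {R : Type*} [CommRing R] {k : ℕ} {a : Fin (k + 1) → R}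
    (htail : HasKoszulSyzygies (Fin.tail a))
    (hreg : ∀ r, r * a 0 ∈ Ideal.span (Set.range (Fin.tail a)) →
      r ∈ Ideal.span (Set.range (Fin.tail a))) : HasKoszulSyzygies a := by
  intro g hg
  have hg0 : g 0 * a 0 + Fin.tail g ⬝ᵥ Fin.tail a = 0 := by
    rwa [dotProduct, Fin.sum_univ_succ] at hg
  obtain ⟨c, hc⟩ : ∃ c : Fin k → R, c ⬝ᵥ Fin.tail a = g 0 := by
    refine Ideal.mem_span_range_iff_exists_fun.1 (hreg _ ?_)
    rw [eq_neg_of_add_eq_zero_left hg0]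
    exact neg_mem (Ideal.mem_span_range_iff_exists_fun.2 ⟨_, rfl⟩)
  obtain ⟨B, hB⟩ := htail (Fin.tail g + a 0 • c) (by
    rw [add_dotProduct, smul_dotProduct, hc, smul_eq_mul, mul_comm, add_comm, hg0])
  refine ⟨Matrix.of (Fin.cons (Fin.cons 0 c) fun i => Fin.cons 0 (B i)), ?_⟩
  refine funext (Fin.cases ?_ fun i => ?_)
  · simp [Matrix.mulVec, dotProduct, Fin.sum_univ_succ, ← hc, Fin.tail]
  · have hBi : g i.succ + a 0 * c i = ∑ j, (B i j - B j i) * a j.succ := congrFun hB i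
    simp [Matrix.mulVec, dotProduct, Fin.sum_univ_succ, ← hBi]
    ring

section Minors

variable {R : Type u} [CommRing R] {k : ℕ} {M : Matrix (Fin 2) (Fin k) R}

theorem mem_minors2 (i j : Fin k) : M 0 i * M 1 j - M 0 j * M 1 i ∈ minors2 M :=
  Ideal.subset_span ⟨(i, j), rfl⟩

theorem minors2_le {I : Ideal R} (h : ∀ i j, M 0 i * M 1 j - M 0 j * M 1 i ∈ I) :
    minors2 M ≤ I :=
  Ideal.span_le.2 (Set.range_subset_iff.2 fun _ => h _ _)

theorem map_minors2 {S F : Type*} [CommRing S] [FunLike F R S] [RingHomClass F R S] (φ : F) :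
    (minors2 M).map φ = minors2 (M.map φ) := by
  simp only [minors2, Ideal.map_span, ← Set.range_comp, Function.comp_def, map_sub, map_mul,
    Matrix.map_apply]

theorem alternating_mulVec_dotProduct_mem_minors2 (B : Matrix (Fin k) (Fin k) R) :
    ((B - Bᵀ) *ᵥ M 0) ⬝ᵥ M 1 ∈ minors2 M := by
  have h : ((B - Bᵀ) *ᵥ M 0) ⬝ᵥ M 1 = ∑ i, ∑ j, B i j * (M 0 j * M 1 i - M 0 i * M 1 j) := by
    rw [Matrix.sub_mulVec, sub_dotProduct, Matrix.mulVec_transpose, ← Matrix.dotProduct_mulVec]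
    simp only [dotProduct, Matrix.mulVec, Finset.sum_mul, Finset.mul_sum,
      ← Finset.sum_sub_distrib]
    exact Finset.sum_congr rfl fun i _ => Finset.sum_congr rfl fun j _ => by ring
  rw [h]
  exact sum_mem fun i _ => sum_mem fun j _ => Ideal.mul_mem_left _ _ (mem_minors2 j i)

theorem HasKoszulSyzygies.dotProduct_mem_minors2 (hM : HasKoszulSyzygies (M 0)) {g : Fin k → R}
    (hg : g ⬝ᵥ M 0 = 0) : g ⬝ᵥ M 1 ∈ minors2 M := by
  obtain ⟨B, rfl⟩ := hM g hg
  exact alternating_mulVec_dotProduct_mem_minors2 B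

theorem exists_dotProduct_eq_of_mem_minors2 {f : R} (hf : f ∈ minors2 M) :
    ∃ g : Fin k → R, g ⬝ᵥ M 0 = 0 ∧ g ⬝ᵥ M 1 = f := by
  induction hf using Submodule.span_induction with
  | mem _ h =>
    obtain ⟨⟨i, j⟩, rfl⟩ := h
    refine ⟨Pi.single j (M 0 i) - Pi.single i (M 0 j), ?_, ?_⟩ <;>
      simp [sub_dotProduct, mul_comm]
  | zero => exact ⟨0, zero_dotProduct _, zero_dotProduct _⟩
  | add _ _ _ _ h₁ h₂ =>
    obtain ⟨g₁, h₁, rfl⟩ := h₁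
    obtain ⟨g₂, h₂, rfl⟩ := h₂
    exact ⟨g₁ + g₂, by rw [add_dotProduct, h₁, h₂, add_zero], add_dotProduct _ _ _⟩
  | smul r _ _ h =>
    obtain ⟨g, h, rfl⟩ := h
    exact ⟨r • g, by rw [smul_dotProduct, h, smul_zero], smul_dotProduct _ _ _⟩

theorem minors2_le_span_range (i : Fin 2) : minors2 M ≤ Ideal.span (Set.range (M i)) := by
  have hmem (j : Fin k) : M i j ∈ Ideal.span (Set.range (M i)) := Ideal.subset_span ⟨j, rfl⟩
  refine minors2_le fun j l => ?_
  fin_cases i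
  · exact sub_mem (Ideal.mul_mem_right _ _ (hmem j)) (Ideal.mul_mem_right _ _ (hmem l))
  · exact sub_mem (Ideal.mul_mem_left _ _ (hmem l)) (Ideal.mul_mem_left _ _ (hmem j))

end Minors

end KoszulSyzygies

section LinearForms

section CommRing

variable {σ K : Type*} [CommRing K]

theorem linearMap_apply_eq_of_isHomogeneous_one {V : Type*} [AddCommGroup V] [Module K V]
    {f g : MvPolynomial σ K →ₗ[K] V} (h : ∀ i, f (X i) = g (X i)) {p : MvPolynomial σ K}
    (hp : p.IsHomogeneous 1) : f p = g p := by
  rw [← mem_homogeneousSubmodule, homogeneousSubmodule_one_eq_span_X] at hp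
  exact LinearMap.eqOn_span (Set.forall_mem_range.2 h) hp

theorem span_le_homogeneousSubmodule_one {s : Set (MvPolynomial σ K)}
    (hs : ∀ p ∈ s, p.IsHomogeneous 1) : Submodule.span K s ≤ homogeneousSubmodule σ K 1 :=
  Submodule.span_le.2 hs

theorem notMem_minors2_of_isHomogeneous_one {k : ℕ}
    {M : Matrix (Fin 2) (Fin k) (MvPolynomial σ K)} (hM : ∀ i j, (M i j).IsHomogeneous 1)
    {p : MvPolynomial σ K} (hp : p.IsHomogeneous 1) (hp0 : p ≠ 0) : p ∉ minors2 M := by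
  have hvars {f : MvPolynomial σ K} {n : ℕ} (hf : f.IsHomogeneous n) :
      f ∈ idealOfVars σ K ^ n :=
    (mem_pow_idealOfVars_iff n f).2 fun d hd =>
      (hf.degree_eq_sum_deg_support hd).le
  have hle : minors2 M ≤ idealOfVars σ K ^ 2 := minors2_le fun i j =>
    hvars (((hM 0 i).mul (hM 1 j)).sub ((hM 0 j).mul (hM 1 i)))
  intro h
  obtain ⟨d, hd⟩ := support_nonempty.2 hp0
  have hdeg := (mem_pow_idealOfVars_iff 2 p).1 (hle h) d hd
  rw [Finsupp.degree_apply, ← hp.degree_eq_sum_deg_support hd] at hdeg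
  omega

end CommRing

variable {σ K : Type*} [Field K]

theorem exists_linearSubstitution {U W : Submodule K (MvPolynomial σ K)}
    (hU : U ≤ homogeneousSubmodule σ K 1) (hW : W ≤ homogeneousSubmodule σ K 1)
    (hUW : Disjoint U W) :
    ∃ φ : MvPolynomial σ K →ₐ[K] MvPolynomial σ K,
      (∀ f, f - φ f ∈ Ideal.span (W : Set (MvPolynomial σ K))) ∧
        (∀ f ∈ W, φ f = 0) ∧ ∀ f ∈ U, φ f = f := by
  obtain ⟨U', hUU', hU'⟩ := hUW.exists_isCompl
  let π := Submodule.projection U' W hU'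
  let φ : MvPolynomial σ K →ₐ[K] MvPolynomial σ K := aeval fun i => π (X i)
  have hφ {f : MvPolynomial σ K} (hf : f.IsHomogeneous 1) : φ f = π f :=
    linearMap_apply_eq_of_isHomogeneous_one (f := φ.toLinearMap) (fun i => aeval_X _ i) hf
  let J := Ideal.span (W : Set (MvPolynomial σ K))
  have hJ : (Ideal.Quotient.mkₐ K J).comp φ = Ideal.Quotient.mkₐ K J := by
    refine MvPolynomial.algHom_ext fun i => (Ideal.Quotient.eq.2 ?_).symm
    have h : X i - π (X i) ∈ W := Submodule.sub_projection_mem hU' (X i)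
    rw [← hφ (isHomogeneous_X K i)] at h
    exact Ideal.subset_span h
  refine ⟨φ, fun f => Ideal.Quotient.eq.1 (AlgHom.congr_fun hJ f).symm, fun f hf => ?_,
    fun f hf => ?_⟩
  · rw [hφ (hW hf)]
    exact (Submodule.projection_apply_eq_zero_iff hU').2 hf
  · rw [hφ (hU hf)]
    exact Submodule.projection_apply_of_mem_left hU' (hUU' hf)

theorem isPrime_span_of_isHomogeneous_one {s : Set (MvPolynomial σ K)}
    (hs : ∀ p ∈ s, p.IsHomogeneous 1) : (Ideal.span s).IsPrime := by
  obtain ⟨φ, hsub, hker, -⟩ := exists_linearSubstitution bot_le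
    (span_le_homogeneousSubmodule_one hs) disjoint_bot_left
  rw [show Ideal.span _ = Ideal.span s from Submodule.span_span_of_tower K _ s] at hsub
  have : Ideal.span s = RingHom.ker φ := by
    refine le_antisymm (Ideal.span_le.2 fun f hf => hker f (Submodule.subset_span hf)) ?_
    intro f hf
    simpa [(RingHom.mem_ker).1 hf] using hsub f
  rw [this]
  exact RingHom.ker_isPrime _

theorem mem_ideal_span_iff_mem_span {s : Set (MvPolynomial σ K)}
    (hs : ∀ p ∈ s, p.IsHomogeneous 1) {p : MvPolynomial σ K} (hp : p.IsHomogeneous 1) :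
    p ∈ Ideal.span s ↔ p ∈ Submodule.span K s := by
  refine ⟨fun h => ?_, fun h => Submodule.span_le_restrictScalars K _ s h⟩
  by_contra hps
  obtain ⟨φ, -, hker, hid⟩ := exists_linearSubstitution
    (span_le_homogeneousSubmodule_one (s := {p}) (by simpa using hp))
    (span_le_homogeneousSubmodule_one hs)
    (Submodule.disjoint_span_singleton_of_notMem hps).symm
  have hφ : Ideal.span s ≤ RingHom.ker φ :=
    Ideal.span_le.2 fun f hf => hker f (Submodule.subset_span hf)
  have hp0 : p = 0 := by
    rw [← hid p (Submodule.mem_span_singleton_self p)]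
    exact hφ h
  exact hps (hp0 ▸ zero_mem _)

theorem prime_of_isHomogeneous_one {p : MvPolynomial σ K} (hp : p.IsHomogeneous 1)
    (hp0 : p ≠ 0) : Prime p :=
  (Ideal.span_singleton_prime hp0).1 (isPrime_span_of_isHomogeneous_one (by simpa using hp))

theorem hasKoszulSyzygies_of_linearIndependent {k : ℕ} {a : Fin k → MvPolynomial σ K}
    (ha : LinearIndependent K a) (ha1 : ∀ j, (a j).IsHomogeneous 1) : HasKoszulSyzygies a := by
  induction k with
  | zero => exact fun g _ => ⟨0, Subsingleton.elim _ _⟩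
  | succ k ih =>
    obtain ⟨htail, h0⟩ := linearIndependent_finSucc.1 ha
    have htail1 : ∀ p ∈ Set.range (Fin.tail a), p.IsHomogeneous 1 :=
      Set.forall_mem_range.2 fun j => ha1 j.succ
    refine (ih htail fun j => ha1 j.succ).of_tail fun r hr => ?_
    refine ((isPrime_span_of_isHomogeneous_one htail1).mem_or_mem hr).resolve_right ?_
    rwa [mem_ideal_span_iff_mem_span htail1 (ha1 0)]

theorem pdLE_span_range_of_isHomogeneous_one {k : ℕ} {a : Fin k → MvPolynomial σ K}
    (ha : ∀ j, (a j).IsHomogeneous 1) :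
    PdLE (MvPolynomial σ K) k (MvPolynomial σ K ⧸ Ideal.span (Set.range a)) := by
  induction k with
  | zero =>
    rw [Set.range_eq_empty, Ideal.span_empty]
    exact pdLE_quotient_bot
  | succ k ih =>
    have hprime := isPrime_span_of_isHomogeneous_one
      (Set.forall_mem_range.2 fun j : Fin k => ha j.succ)
    rw [← Fin.cons_self_tail a, Fin.range_cons, Set.insert_eq, Set.union_comm, Ideal.span_union]
    exact PdLE.sup_span_singleton (ih fun j => ha j.succ) (a 0)

theorem isPrime_minors2_sup_span_singleton {k : ℕ}
    {M : Matrix (Fin 2) (Fin k) (MvPolynomial σ K)} (hM : ∀ i j, (M i j).IsHomogeneous 1)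
    (hprime : (minors2 M).IsPrime) {q : MvPolynomial σ K} (hq : q.IsHomogeneous 1)
    (hqM : q ∉ Submodule.span K (Set.range (M 0) ∪ Set.range (M 1))) :
    (minors2 M ⊔ Ideal.span {q}).IsPrime := by
  obtain ⟨φ, hsub, hker, hid⟩ := exists_linearSubstitution
    (span_le_homogeneousSubmodule_one (s := Set.range (M 0) ∪ Set.range (M 1)) (by
      rintro _ (⟨j, rfl⟩ | ⟨j, rfl⟩) <;> exact hM _ j))
    (span_le_homogeneousSubmodule_one (s := {q}) (by simpa using hq))
    (Submodule.disjoint_span_singleton_of_notMem hqM)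
  rw [show Ideal.span _ = Ideal.span {q} from Submodule.span_span_of_tower K _ {q}] at hsub
  have hφM : M.map φ = M := by
    ext1 i j
    refine hid _ (Submodule.subset_span ?_)
    fin_cases i
    exacts [Or.inl ⟨j, rfl⟩, Or.inr ⟨j, rfl⟩]
  have hle : minors2 M ≤ (minors2 M).comap φ := by
    rw [← Ideal.map_le_iff_le_comap, map_minors2]
    exact (congrArg minors2 hφM).le
  have : minors2 M ⊔ Ideal.span {q} = (minors2 M).comap φ := by
    refine le_antisymm (sup_le hle ?_) fun f hf => ?_
    · rw [Ideal.span_singleton_le_iff_mem, Ideal.mem_comap,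
        hker q (Submodule.mem_span_singleton_self q)]
      exact zero_mem _
    · rw [← add_sub_cancel (φ f) f]
      exact add_mem (Ideal.mem_sup_left hf) (Ideal.mem_sup_right (hsub f))
  rw [this]
  exact Ideal.comap_isPrime _ _

end LinearForms

section SubalgebraOfLinearForms

theorem exists_algEquiv_apply_X_eq {σ κ K : Type*} [CommRing K]
    (b : Module.Basis κ K (homogeneousSubmodule σ K 1)) :
    ∃ e : MvPolynomial κ K ≃ₐ[K] MvPolynomial σ K, ∀ i, e (X i) = b i := by
  let bX : Module.Basis σ K (homogeneousSubmodule σ K 1) :=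
    (Module.Basis.span (linearIndependent_X σ K)).map
      (LinearEquiv.ofEq _ _ homogeneousSubmodule_one_eq_span_X.symm)
  have hbX (i : σ) : (bX i : MvPolynomial σ K) = X i := by
    simp [bX, Module.Basis.span_apply]
  have hι : (SymmetricAlgebra.equivMvPolynomial bX).toLinearMap ∘ₗ SymmetricAlgebra.ι K _ =
      (homogeneousSubmodule σ K 1).subtype :=
    bX.ext fun i => (SymmetricAlgebra.equivMvPolynomial_ι_apply bX i).trans (hbX i).symm
  refine ⟨(SymmetricAlgebra.equivMvPolynomial b).symm.trans
    (SymmetricAlgebra.equivMvPolynomial bX), fun i => ?_⟩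
  rw [AlgEquiv.trans_apply, SymmetricAlgebra.equivMvPolynomial_symm_X]
  exact LinearMap.congr_fun hι (b i)

variable {σ K : Type*} [Field K]

theorem flat_aeval_of_linearIndependent {ι : Type*} {z : ι → MvPolynomial σ K}
    (hz : LinearIndependent K z) (hz1 : ∀ i, (z i).IsHomogeneous 1) :
    (aeval z : MvPolynomial ι K →ₐ[K] MvPolynomial σ K).toRingHom.Flat := by
  have hz' : LinearIndependent K fun i => (⟨z i, hz1 i⟩ : homogeneousSubmodule σ K 1) :=
    .of_comp (Submodule.subtype _) hz
  let b := (Module.Basis.sumExtend hz').reindex (Equiv.sumComm _ _)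
  have hb (i : ι) : (b (Sum.inr i) : MvPolynomial σ K) = z i := by
    simp [b, Module.Basis.sumExtend]
    rfl
  obtain ⟨e, he⟩ := exists_algEquiv_apply_X_eq b
  let e' := (sumAlgEquiv K (Module.Basis.sumExtendIndex hz') ι).symm.trans e
  have haeval : (aeval z : MvPolynomial ι K →ₐ[K] MvPolynomial σ K).toRingHom =
      e'.toRingEquiv.toRingHom.comp C := by
    refine MvPolynomial.ringHom_ext (fun r => ?_) fun i => ?_
    · have heC : e (C r) = C r := e.commutes r
      simp [e', heC]
    · simp [e', he, hb]
  rw [haeval]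
  refine RingHom.Flat.comp ?_ (RingHom.Flat.of_bijective e'.bijective)
  rw [← MvPolynomial.algebraMap_eq, RingHom.flat_algebraMap_iff]
  infer_instance

theorem pdLE_span_of_subset_adjoin {s T : Set (MvPolynomial σ K)} (hs : s.Finite)
    (hs1 : ∀ p ∈ s, p.IsHomogeneous 1) (hT : T ⊆ Algebra.adjoin K s) :
    PdLE (MvPolynomial σ K) s.ncard (MvPolynomial σ K ⧸ Ideal.span T) := by
  obtain ⟨b, hbs, hspan, hb⟩ := exists_linearIndependent K s
  have hbfin : Finite b := hs.subset hbs
  have hTb : T ⊆ Set.range (aeval (R := K) ((↑) : b → MvPolynomial σ K)) := by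
    rwa [← Algebra.adjoin_span, ← hspan, Algebra.adjoin_span, Algebra.adjoin_eq_range] at hT
  have hpd := (globalDimLE_mvPolynomial K b).pdLE_quotient_map
    (flat_aeval_of_linearIndependent hb fun i => hs1 _ (hbs i.2))
    (Ideal.span (aeval (R := K) ((↑) : b → MvPolynomial σ K) ⁻¹' T))
  rw [Ideal.map_span] at hpd
  have himage := Set.image_preimage_eq_of_subset hTb
  refine PdLE.mono (m := Nat.card b) ?_ (Set.ncard_le_ncard hbs hs)
  rwa [← himage]

end SubalgebraOfLinearForms

section Pencil

open scoped Matrix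

theorem HasKoszulSyzygies.exists_mulVec_dotProduct_eq {R ι : Type*} [CommRing R] [Fintype ι]
    {a b : ι → R} (ha : HasKoszulSyzygies a) {n : ℕ} {g : ℕ → ι → R} (hg : ∀ i ≥ n, g i = 0)
    (h : ∀ i, g (i + 1) ⬝ᵥ b = g i ⬝ᵥ a) :
    ∃ B : Matrix ι ι R, g 0 ⬝ᵥ b = ((B - Bᵀ) *ᵥ a) ⬝ᵥ b := by
  induction n generalizing g with
  | zero => exact ⟨0, by simp [hg 0 le_rfl]⟩
  | succ n ih =>
    obtain ⟨B, hB⟩ := ih (g := fun i => g (i + 1)) (fun i hi => hg _ (by omega)) fun i => h _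
    obtain ⟨B', hB'⟩ := ha (g 0 + (B - Bᵀ) *ᵥ b) (by
      rw [add_dotProduct, ← h 0, hB, alternating_mulVec_dotProduct_comm, neg_add_cancel])
    refine ⟨B', ?_⟩
    rw [← hB', add_dotProduct, alternating_mulVec_dotProduct_self, add_zero]

/-- The ideal of `R[X]` generated by the entries of the generic member `M 1 - X • M 0` of the
pencil spanned by the two rows of `M`. Its contraction to `R` is the ideal of `2 × 2` minors as
soon as `M 0` has Koszul syzygies, which is how primality of determinantal ideals is reduced to
primality of ideals generated by linear forms. -/
noncomputable def pencilIdeal {R : Type*} [CommRing R] {k : ℕ} (M : Matrix (Fin 2) (Fin k) R) :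
    Ideal (Polynomial R) :=
  Ideal.span (Set.range fun j =>
    Polynomial.C (M 1 j) - Polynomial.X * Polynomial.C (M 0 j))

section CommRing

variable {R : Type u} [CommRing R] {k : ℕ} {M : Matrix (Fin 2) (Fin k) R}

theorem mem_pencilIdeal (j : Fin k) :
    Polynomial.C (M 1 j) - Polynomial.X * Polynomial.C (M 0 j) ∈ pencilIdeal M :=
  Ideal.subset_span ⟨j, rfl⟩

theorem minors2_le_comap_pencilIdeal : minors2 M ≤ (pencilIdeal M).comap Polynomial.C :=
  minors2_le fun i j => by
    have h : Polynomial.C (M 0 i * M 1 j - M 0 j * M 1 i) =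
        Polynomial.C (M 0 i) * (Polynomial.C (M 1 j) - Polynomial.X * Polynomial.C (M 0 j)) -
          Polynomial.C (M 0 j) *
            (Polynomial.C (M 1 i) - Polynomial.X * Polynomial.C (M 0 i)) := by
      simp only [map_sub, map_mul]
      ring
    rw [Ideal.mem_comap, h]
    exact sub_mem (Ideal.mul_mem_left _ _ (mem_pencilIdeal j))
      (Ideal.mul_mem_left _ _ (mem_pencilIdeal i))

theorem comap_C_pencilIdeal (hM : HasKoszulSyzygies (M 0)) :
    (pencilIdeal M).comap Polynomial.C = minors2 M := by
  refine le_antisymm (fun f hf => ?_) minors2_le_comap_pencilIdeal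
  obtain ⟨G, hG⟩ := Ideal.mem_span_range_iff_exists_fun.1 hf
  let g : ℕ → Fin k → R := fun n j => (G j).coeff n
  have hcoeff (n : ℕ) : (Polynomial.C f).coeff n =
      g n ⬝ᵥ M 1 - ∑ j, (G j * Polynomial.X).coeff n * M 0 j := by
    rw [← hG, Polynomial.finsetSum_coeff, dotProduct, ← Finset.sum_sub_distrib]
    refine Finset.sum_congr rfl fun j _ => ?_
    rw [mul_sub, ← mul_assoc, Polynomial.coeff_sub, Polynomial.coeff_mul_C,
      Polynomial.coeff_mul_C]
  have hg0 : f = g 0 ⬝ᵥ M 1 := by simpa using hcoeff 0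
  have hg (n : ℕ) : g (n + 1) ⬝ᵥ M 1 = g n ⬝ᵥ M 0 := by
    have h := hcoeff (n + 1)
    simp only [Polynomial.coeff_C_succ, Polynomial.coeff_mul_X] at h
    exact sub_eq_zero.1 h.symm
  have hlarge : ∀ n ≥ (Finset.univ.sup fun j => (G j).natDegree) + 1, g n = 0 := fun n hn =>
    funext fun j => Polynomial.coeff_eq_zero_of_natDegree_lt
      ((Finset.le_sup (f := fun j => (G j).natDegree) (Finset.mem_univ j)).trans_lt hn)
  obtain ⟨B, hB⟩ := hM.exists_mulVec_dotProduct_eq hlarge hg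
  rw [hg0, hB]
  exact alternating_mulVec_dotProduct_mem_minors2 B

theorem mem_pencilIdeal_of_X_sub_C_mul_mem {l : R} (hl : HasKoszulSyzygies (M 1 - l • M 0))
    {f : Polynomial R} (hf : (Polynomial.X - Polynomial.C l) * f ∈ pencilIdeal M) :
    f ∈ pencilIdeal M := by
  obtain ⟨G, hG⟩ := Ideal.mem_span_range_iff_exists_fun.1 hf
  let g : Fin k → R := fun j => (G j).eval l
  have hg : g ⬝ᵥ (M 1 - l • M 0) = 0 := by
    have h := congrArg (Polynomial.eval l) hG
    simpa [Polynomial.eval_finsetSum, dotProduct, g, mul_comm l] using h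
  have hminors : g ⬝ᵥ M 0 ∈ minors2 M := by
    obtain ⟨B, hB⟩ := hl g hg
    rw [hB, Matrix.mulVec_sub, Matrix.mulVec_smul, sub_dotProduct, smul_dotProduct,
      alternating_mulVec_dotProduct_self, smul_zero, sub_zero,
      alternating_mulVec_dotProduct_comm, neg_mem_iff]
    exact alternating_mulVec_dotProduct_mem_minors2 B
  choose H hH using fun j => Polynomial.X_sub_C_dvd_sub_C_eval (p := G j) (a := l)
  have hf' : f = ∑ j, H j * (Polynomial.C (M 1 j) - Polynomial.X * Polynomial.C (M 0 j)) -
      Polynomial.C (g ⬝ᵥ M 0) := by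
    refine (Polynomial.monic_X_sub_C l).isRegular.left ?_
    have hgC := congrArg Polynomial.C hg
    simp only [dotProduct, map_sum, map_zero] at hgC
    simp only [dotProduct, map_sum, mul_sub, Finset.mul_sum]
    rw [← hG, ← sub_zero (∑ j, _ * _), ← hgC, ← Finset.sum_sub_distrib,
      ← Finset.sum_sub_distrib]
    refine Finset.sum_congr rfl fun j _ => ?_
    simp only [Pi.sub_apply, Pi.smul_apply, smul_eq_mul, map_sub, map_mul]
    linear_combination (Polynomial.C (M 1 j) - Polynomial.X * Polynomial.C (M 0 j)) * hH j
  rw [hf']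
  exact sub_mem (sum_mem fun j _ => Ideal.mul_mem_left _ _ (mem_pencilIdeal j))
    (minors2_le_comap_pencilIdeal hminors)

theorem mem_pencilIdeal_of_map_mul_mem {K : Type*} [Field K] [IsAlgClosed K] [Algebra K R]
    (hM : ∀ l : K, HasKoszulSyzygies (M 1 - l • M 0)) {p : Polynomial K}
    (hp : p ≠ 0) {f : Polynomial R} (hf : p.map (algebraMap K R) * f ∈ pencilIdeal M) :
    f ∈ pencilIdeal M := by
  induction hd : p.natDegree generalizing p f with
  | zero =>
    obtain ⟨c, rfl⟩ := Polynomial.natDegree_eq_zero.1 hd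
    have hc : IsUnit c := (Polynomial.C_ne_zero.1 hp).isUnit
    rwa [Polynomial.map_C, Ideal.unit_mul_mem_iff_mem _
      ((hc.map (algebraMap K R)).map Polynomial.C)] at hf
  | succ d ih =>
    obtain ⟨l, hl⟩ := IsAlgClosed.exists_root p
      (Polynomial.natDegree_pos_iff_degree_pos.1 (by omega)).ne'
    obtain ⟨p', rfl⟩ := Polynomial.dvd_iff_isRoot.2 hl
    have hp' : p' ≠ 0 := right_ne_zero_of_mul hp
    rw [Polynomial.map_mul, Polynomial.map_sub, Polynomial.map_X, Polynomial.map_C,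
      mul_assoc] at hf
    have hl' : HasKoszulSyzygies (M 1 - algebraMap K R l • M 0) := by
      rw [algebraMap_smul]
      exact hM l
    refine ih hp' (mem_pencilIdeal_of_X_sub_C_mul_mem hl' hf) ?_
    rw [Polynomial.natDegree_mul (Polynomial.X_sub_C_ne_zero l) hp',
      Polynomial.natDegree_X_sub_C] at hd
    omega

end CommRing

section MvPolynomial

variable {σ K : Type*} [CommRing K]

/-- The ring `K[σ][T]`, viewed as `K[T][σ]`. -/
noncomputable def polynomialMvPolynomialEquiv (σ K : Type*) [CommRing K] :
    Polynomial (MvPolynomial σ K) ≃ₐ[K] MvPolynomial σ (Polynomial K) :=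
  (optionEquivLeft K σ).symm.trans (optionEquivRight K σ)

theorem polynomialMvPolynomialEquiv_X :
    polynomialMvPolynomialEquiv σ K Polynomial.X = C Polynomial.X := by
  simp [polynomialMvPolynomialEquiv]

theorem polynomialMvPolynomialEquiv_C (p : MvPolynomial σ K) :
    polynomialMvPolynomialEquiv σ K (Polynomial.C p) = map Polynomial.C p := by
  induction p using MvPolynomial.induction_on with
  | C a => simp [polynomialMvPolynomialEquiv]
  | add p q hp hq => simp only [map_add, hp, hq]
  | mul_X p i hp =>
    rw [map_mul, map_mul, map_mul, hp, map_X]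
    simp [polynomialMvPolynomialEquiv]

theorem polynomialMvPolynomialEquiv_map_C (p : Polynomial K) :
    polynomialMvPolynomialEquiv σ K (p.map C) = C p := by
  induction p using Polynomial.induction_on' with
  | add p q hp hq => simp only [Polynomial.map_add, map_add, hp, hq]
  | monomial n a =>
    simp only [← Polynomial.C_mul_X_pow_eq_monomial, Polynomial.map_mul, Polynomial.map_pow,
      Polynomial.map_C, Polynomial.map_X, map_mul, map_pow, polynomialMvPolynomialEquiv_X,
      polynomialMvPolynomialEquiv_C, MvPolynomial.map_C]

/-- The localization `K[σ][T] → K(T)[σ]`, which inverts the nonzerodivisors of `K[T]`. -/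
noncomputable def toFractionRing (σ K : Type*) [CommRing K] :
    Polynomial (MvPolynomial σ K) →+* MvPolynomial σ (FractionRing (Polynomial K)) :=
  (MvPolynomial.map (algebraMap (Polynomial K) (FractionRing (Polynomial K)))).comp
    (polynomialMvPolynomialEquiv σ K).toRingEquiv.toRingHom

theorem toFractionRing_C (p : MvPolynomial σ K) :
    toFractionRing σ K (Polynomial.C p) = MvPolynomial.map
      ((algebraMap (Polynomial K) (FractionRing (Polynomial K))).comp Polynomial.C) p := by
  rw [← MvPolynomial.map_map, ← polynomialMvPolynomialEquiv_C]
  rfl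

theorem toFractionRing_X :
    toFractionRing σ K Polynomial.X =
      C (algebraMap (Polynomial K) (FractionRing (Polynomial K)) Polynomial.X) := by
  rw [← MvPolynomial.map_C, ← polynomialMvPolynomialEquiv_X]
  rfl

theorem exists_map_mul_mem_of_toFractionRing_mem_map [Nontrivial K]
    {J : Ideal (Polynomial (MvPolynomial σ K))}
    {f : Polynomial (MvPolynomial σ K)} (hf : toFractionRing σ K f ∈ J.map (toFractionRing σ K)) :
    ∃ p : Polynomial K, p ≠ 0 ∧ p.map C * f ∈ J := by
  let e := polynomialMvPolynomialEquiv σ K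
  let _ : Algebra (MvPolynomial σ (Polynomial K))
    (MvPolynomial σ (FractionRing (Polynomial K))) := MvPolynomial.algebraMvPolynomial
  rw [toFractionRing, ← Ideal.map_map] at hf
  obtain ⟨_, ⟨p, hp, rfl⟩, hmem⟩ := (IsLocalization.algebraMap_mem_map_algebraMap_iff
    ((nonZeroDivisors (Polynomial K)).map (C (σ := σ))) _ _ _).1 hf
  refine ⟨p, nonZeroDivisors.ne_zero hp, ?_⟩
  rw [← polynomialMvPolynomialEquiv_map_C] at hmem
  obtain ⟨z, hz, hzf⟩ := (Ideal.mem_map_iff_of_surjective _ e.surjective).1 hmem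
  rwa [e.injective (hzf.trans (map_mul e _ _).symm)] at hz

theorem isPrime_pencilIdeal {K : Type*} [Field K] [IsAlgClosed K] {k : ℕ}
    {M : Matrix (Fin 2) (Fin k) (MvPolynomial σ K)}
    (hM : ∀ i j, (M i j).IsHomogeneous 1)
    (hpencil : ∀ l : K, HasKoszulSyzygies (M 1 - l • M 0)) : (pencilIdeal M).IsPrime := by
  have hcomap : pencilIdeal M =
      ((pencilIdeal M).map (toFractionRing σ K)).comap (toFractionRing σ K) := by
    refine le_antisymm Ideal.le_comap_map fun f hf => ?_
    obtain ⟨p, hp, hpf⟩ := exists_map_mul_mem_of_toFractionRing_mem_map hf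
    exact mem_pencilIdeal_of_map_mul_mem hpencil hp hpf
  have hprime : ((pencilIdeal M).map (toFractionRing σ K)).IsPrime := by
    rw [pencilIdeal, Ideal.map_span, ← Set.range_comp]
    refine isPrime_span_of_isHomogeneous_one (Set.forall_mem_range.2 fun j => ?_)
    rw [Function.comp_apply, map_sub, map_mul, toFractionRing_C, toFractionRing_C,
      toFractionRing_X]
    exact ((hM 1 j).map _).sub (((hM 0 j).map _).C_mul _)
  rw [hcomap]
  exact Ideal.comap_isPrime _ _

end MvPolynomial

end Pencil

section OneGeneric

section CommRing

variable {K : Type*} [Field K] {R : Type u} [CommRing R] [Algebra K R] {m l : ℕ}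
  {M : Matrix (Fin m) (Fin l) R}

theorem oneGeneric_iff :
    OneGeneric K M ↔ ∀ c : Fin m → K, c ≠ 0 → LinearIndependent K (∑ i, c i • M i) := by
  have h (c : Fin m → K) (w : Fin l → K) : ∑ j, w j • (∑ i, c i • M i) j =
      ∑ i, ∑ j, algebraMap K R (c i * w j) * M i j := by
    rw [Finset.sum_comm]
    simp_rw [Finset.sum_apply, Pi.smul_apply, Finset.smul_sum, smul_smul, Algebra.smul_def,
      mul_comm (c _)]
  simp only [Fintype.linearIndependent_iff, h]
  constructor
  · intro hM c hc w hw
    by_contra! hne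
    exact hM c w hc (Function.ne_iff.2 hne) hw
  · intro hM c w hc hw hcw
    exact hw (funext (hM c hc w hcw))

theorem OneGeneric.submatrix (hM : OneGeneric K M) {m' l' : ℕ} (e : Fin m' ≃ Fin m)
    {f : Fin l' → Fin l} (hf : Function.Injective f) : OneGeneric K (M.submatrix e f) := by
  rw [oneGeneric_iff] at hM ⊢
  intro c hc
  have hc' : c ∘ e.symm ≠ 0 := fun h => hc <| by
    rw [← Function.comp_id c, ← e.symm_comp_self, ← Function.comp_assoc, h, Pi.zero_comp]
  convert (hM _ hc').comp f hf using 1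
  ext j
  simp only [Finset.sum_apply, Pi.smul_apply, Function.comp_apply]
  exact Fintype.sum_equiv e _ _ fun i => by simp

end CommRing

section LinearForms

variable {σ K : Type*} [Field K] {k : ℕ}

theorem OneGeneric.linearIndependent_row {M : Matrix (Fin 2) (Fin k) (MvPolynomial σ K)}
    (h : OneGeneric K M) (i : Fin 2) : LinearIndependent K (M i) := by
  have := oneGeneric_iff.1 h (Pi.single i 1) (by simp)
  rwa [Finset.sum_eq_single i (fun j _ hj => by rw [Pi.single_eq_of_ne hj, zero_smul]) (by simp),
    Pi.single_eq_same, one_smul] at this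

theorem OneGeneric.isPrime_minors2 [IsAlgClosed K]
    {M : Matrix (Fin 2) (Fin k) (MvPolynomial σ K)} (h : OneGeneric K M)
    (hM : ∀ i j, (M i j).IsHomogeneous 1) : (minors2 M).IsPrime := by
  have hpencil (l : K) : HasKoszulSyzygies (M 1 - l • M 0) := by
    refine hasKoszulSyzygies_of_linearIndependent ?_ fun j => ?_
    · simpa [sub_eq_neg_add] using oneGeneric_iff.1 h ![-l, 1] (by simp)
    · exact (hM 1 j).sub (Submodule.smul_mem (homogeneousSubmodule σ K 1) l (hM 0 j))
  have := isPrime_pencilIdeal hM hpencil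
  rw [← comap_C_pencilIdeal
    (hasKoszulSyzygies_of_linearIndependent (h.linearIndependent_row 0) (hM 0))]
  exact Ideal.comap_isPrime _ _

end LinearForms

theorem minors2_succ {R : Type u} [CommRing R] {k : ℕ} (M : Matrix (Fin 2) (Fin (k + 1)) R) :
    minors2 M = minors2 (M.submatrix id Fin.succ) ⊔
      repByMinors (M 0 0) (M 1 0) (Fin.tail (M 0)) (Fin.tail (M 1)) := by
  have hrep (j : Fin k) : M 0 0 * M 1 j.succ - M 1 0 * M 0 j.succ ∈
      repByMinors (M 0 0) (M 1 0) (Fin.tail (M 0)) (Fin.tail (M 1)) :=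
    Ideal.subset_span ⟨j, rfl⟩
  apply le_antisymm
  · refine minors2_le (Fin.cases (Fin.cases ?_ fun j => ?_) fun i => Fin.cases ?_ fun j => ?_)
    · rw [sub_self]
      exact zero_mem _
    · rw [mul_comm (M 0 j.succ)]
      exact Ideal.mem_sup_right (hrep j)
    · rw [← neg_sub, neg_mem_iff, mul_comm (M 0 i.succ)]
      exact Ideal.mem_sup_right (hrep i)
    · exact Ideal.mem_sup_left (mem_minors2 (M := M.submatrix id Fin.succ) i j)
  · refine sup_le (minors2_le fun i j => mem_minors2 i.succ j.succ) ?_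
    rw [repByMinors, Ideal.span_le, Set.range_subset_iff]
    intro j
    rw [mul_comm (M 1 0)]
    exact mem_minors2 0 j.succ

theorem OneGeneric.pdLE_minors2 {σ K : Type*} [Field K] [IsAlgClosed K] {k : ℕ}
    {M : Matrix (Fin 2) (Fin (k + 1)) (MvPolynomial σ K)} (h : OneGeneric K M)
    (hM : ∀ i j, (M i j).IsHomogeneous 1) :
    PdLE (MvPolynomial σ K) k (MvPolynomial σ K ⧸ minors2 M) := by
  induction k with
  | zero =>
    have : Subsingleton (Fin (0 + 1)) := inferInstanceAs (Subsingleton (Fin 1))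
    have hbot : minors2 M = ⊥ := le_bot_iff.1 <| minors2_le fun i j => by
      rw [Subsingleton.elim i j, sub_self]
      exact zero_mem _
    rw [hbot]
    exact pdLE_quotient_bot
  | succ k ih =>
    let T := M.submatrix id Fin.succ
    have hT : ∀ i j, (T i j).IsHomogeneous 1 := fun i j => hM i j.succ
    have hTgen : OneGeneric K T := h.submatrix (Equiv.refl _) (Fin.succ_injective _)
    have hprime := hTgen.isPrime_minors2 hT
    have hT0 : T 0 0 ∉ minors2 T :=
      notMem_minors2_of_isHomogeneous_one hT (hT 0 0) ((hTgen.linearIndependent_row 0).ne_zero 0)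
    rw [minors2_succ]
    refine PdLE.sup_span_range_of_linkage (P := minors2 T) (g := T 0)
      (q := M 0 0 * T 1 0 - M 1 0 * T 0 0) hT0 (fun j => ?_) (ih hTgen hT)
      (minors2_le_span_range 0) (pdLE_span_range_of_isHomogeneous_one (hT 0))
    have hrel : T 0 0 * (M 0 0 * T 1 j - M 1 0 * T 0 j) - (M 0 0 * T 1 0 - M 1 0 * T 0 0) * T 0 j =
        M 0 0 * (T 0 0 * T 1 j - T 0 j * T 1 0) := by ring
    have hmem := Ideal.mul_mem_left _ (M 0 0) (mem_minors2 (M := T) 0 j)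
    rwa [← hrel] at hmem

end OneGeneric

section Quadrics

open scoped Matrix

section RepByMinors

variable {R : Type u} [CommRing R] {n : ℕ} {x y : R} {u v : Fin n → R}

theorem mem_repByMinors (j : Fin n) : x * v j - y * u j ∈ repByMinors x y u v :=
  Ideal.subset_span ⟨j, rfl⟩

theorem repByMinors_comm : repByMinors x y u v = repByMinors y x v u := by
  have hle {x y : R} {u v : Fin n → R} : repByMinors x y u v ≤ repByMinors y x v u :=
    Ideal.span_le.2 <| Set.range_subset_iff.2 fun j => by
      rw [SetLike.mem_coe, ← neg_sub, neg_mem_iff]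
      exact mem_repByMinors j
  exact le_antisymm hle hle

theorem repByMinors_cons (a b : R) : repByMinors x y (Fin.cons a u) (Fin.cons b v) =
    Ideal.span {x * b - y * a} ⊔ repByMinors x y u v := by
  have h : (fun j => x * (Fin.cons b v : Fin (n + 1) → R) j - y * (Fin.cons a u : _ → R) j) =
      Fin.cons (x * b - y * a) fun j => x * v j - y * u j :=
    funext (Fin.cases rfl fun _ => rfl)
  rw [repByMinors, h, Fin.range_cons, Ideal.span_insert, repByMinors]

theorem repByMinors_sup_span_singleton : repByMinors x y u v ⊔ Ideal.span {x} =
    Ideal.span {x} ⊔ Ideal.span {y} * (Ideal.span {x} ⊔ Ideal.span (Set.range u)) := by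
  have hx (r : R) (I : Ideal R) : x * r ∈ Ideal.span {x} ⊔ I :=
    Ideal.mem_sup_left (Ideal.mul_mem_right _ _ (Ideal.mem_span_singleton_self x))
  rw [Ideal.mul_sup, ← sup_assoc, sup_eq_left.2 (Ideal.mul_le_right : _ * Ideal.span {x} ≤ _),
    Ideal.span_mul_span', Set.singleton_mul, ← Set.range_comp, sup_comm]
  refine le_antisymm (sup_le le_sup_left (Ideal.span_le.2 ?_))
    (sup_le le_sup_left (Ideal.span_le.2 ?_)) <;> refine Set.range_subset_iff.2 fun j => ?_
  · exact sub_mem (hx _ _) (Ideal.mem_sup_right (Ideal.subset_span ⟨j, rfl⟩))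
  · have hyu := sub_mem (hx (v j) (repByMinors x y u v)) (Ideal.mem_sup_right (mem_repByMinors j))
    rwa [sub_sub_cancel] at hyu

theorem mul_mem_repByMinors_iff [IsDomain R] (hx : Prime x) (hy : ¬x ∣ y) {f : R} :
    x * f ∈ repByMinors x y u v ↔
      ∃ (c : Fin n → R) (t : R), c ⬝ᵥ u = t * x ∧ c ⬝ᵥ v - t * y = f := by
  have hsum (c : Fin n → R) : ∑ j, c j * (x * v j - y * u j) = x * c ⬝ᵥ v - y * c ⬝ᵥ u := by
    simp only [dotProduct, Finset.mul_sum, ← Finset.sum_sub_distrib]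
    exact Finset.sum_congr rfl fun j _ => by ring
  simp only [repByMinors, Ideal.mem_span_range_iff_exists_fun, hsum]
  refine exists_congr fun c => ⟨fun h => ?_, ?_⟩
  · have hdvd : x ∣ y * c ⬝ᵥ u := ⟨c ⬝ᵥ v - f, by linear_combination -h⟩
    obtain ⟨t, ht⟩ := (hx.dvd_or_dvd hdvd).resolve_left hy
    refine ⟨t, ht.trans (mul_comm x t), mul_left_cancel₀ hx.ne_zero ?_⟩
    linear_combination h + y * ht
  · rintro ⟨t, ht, rfl⟩
    rw [ht]
    ring

end RepByMinors

/-- The ideal represented by minors by the matrix obtained from the `2 × (m + 1)` matrix `M` by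
inserting the columns `(0, q)ᵀ` and `(p, 0)ᵀ` after its first column. -/
def quadricIdeal {R : Type u} [CommRing R] {m : ℕ} (M : Matrix (Fin 2) (Fin (m + 1)) R)
    (p q : R) : Ideal R :=
  repByMinors (M 0 0) (M 1 0) (Fin.cons 0 (Fin.cons p (Fin.tail (M 0))))
    (Fin.cons q (Fin.cons 0 (Fin.tail (M 1))))

section CommRing

variable {R : Type u} [CommRing R] {m : ℕ} {M : Matrix (Fin 2) (Fin (m + 1)) R} {p q : R}

theorem quadricIdeal_submatrix_swap :
    quadricIdeal (M.submatrix (Equiv.swap 0 1) id) q p = quadricIdeal M p q := by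
  change repByMinors (M 1 0) (M 0 0) (Fin.cons 0 (Fin.cons q (Fin.tail (M 1))))
    (Fin.cons p (Fin.cons 0 (Fin.tail (M 0)))) = _
  rw [repByMinors_comm, quadricIdeal]
  simp only [repByMinors_cons]
  exact sup_left_comm _ _ _

theorem quadricIdeal_sup_span_singleton : quadricIdeal M p q ⊔ Ideal.span {M 0 0} =
    Ideal.span {M 0 0} ⊔
      Ideal.span {M 1 0} * Ideal.span (Set.range (Fin.cons p (M 0) : Fin (m + 2) → R)) := by
  have hrange : Ideal.span (Set.range (Fin.cons p (M 0) : Fin (m + 2) → R)) =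
      Ideal.span {p} ⊔ (Ideal.span {M 0 0} ⊔ Ideal.span (Set.range (Fin.tail (M 0)))) := by
    rw [Fin.range_cons, Ideal.span_insert, ← Ideal.span_insert (M 0 0), ← Fin.range_cons,
      Fin.cons_self_tail]
  rw [quadricIdeal, repByMinors_sup_span_singleton, hrange]
  simp only [Fin.range_cons, Ideal.span_insert, Set.singleton_zero, Ideal.span_zero, bot_sup_eq,
    sup_left_comm]

variable [IsDomain R] (hx : Prime (M 0 0)) (hy : ¬M 0 0 ∣ M 1 0)

include hx hy

theorem mul_mem_quadricIdeal_iff {f : R} : M 0 0 * f ∈ quadricIdeal M p q ↔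
    ∃ g : Fin (m + 1) → R, p ∣ g ⬝ᵥ M 0 ∧ q ∣ f - g ⬝ᵥ M 1 := by
  rw [quadricIdeal, mul_mem_repByMinors_iff hx hy]
  constructor
  · rintro ⟨c, t, hc, rfl⟩
    refine ⟨Fin.cons (-t) fun j => c j.succ.succ, ⟨-c 1, ?_⟩, ⟨c 0, ?_⟩⟩
    · simp only [dotProduct, Fin.sum_univ_succ, Fin.cons_zero, Fin.cons_succ, Fin.tail,
        Fin.succ_zero_eq_one] at hc ⊢
      linear_combination hc
    · simp only [dotProduct, Fin.sum_univ_succ, Fin.cons_zero, Fin.cons_succ, Fin.tail]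
      ring
  · rintro ⟨g, ⟨h, hh⟩, ⟨h', hh'⟩⟩
    refine ⟨Fin.cons h' (Fin.cons (-h) (Fin.tail g)), -g 0, ?_, ?_⟩
    · simp only [dotProduct, Fin.sum_univ_succ, Fin.cons_zero, Fin.cons_succ, Fin.tail] at hh ⊢
      linear_combination hh
    · simp only [dotProduct, Fin.sum_univ_succ, Fin.cons_zero, Fin.cons_succ, Fin.tail] at hh' ⊢
      linear_combination -hh'

theorem mem_sup_iff_mul_mem_quadricIdeal_dotProduct (hM : HasKoszulSyzygies (M 0))
    (w : Fin (m + 1) → R) (f : R) :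
    f ∈ minors2 M ⊔ Ideal.span {q} ⊔ Ideal.span {w ⬝ᵥ M 1} ↔
      M 0 0 * f ∈ quadricIdeal M (w ⬝ᵥ M 0) q := by
  rw [mul_mem_quadricIdeal_iff hx hy]
  constructor
  · intro hf
    obtain ⟨f₁, hf₁, _, hc, rfl⟩ := Submodule.mem_sup.1 hf
    obtain ⟨f₀, hf₀, b, hb, rfl⟩ := Submodule.mem_sup.1 hf₁
    obtain ⟨c, rfl⟩ := Ideal.mem_span_singleton'.1 hc
    obtain ⟨g, hg, rfl⟩ := exists_dotProduct_eq_of_mem_minors2 hf₀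
    refine ⟨g + c • w, ⟨c, ?_⟩, ?_⟩
    · rw [add_dotProduct, smul_dotProduct, hg, zero_add, smul_eq_mul, mul_comm]
    · rw [add_dotProduct, smul_dotProduct, smul_eq_mul, add_sub_add_right_eq_sub,
        add_sub_cancel_left]
      exact Ideal.mem_span_singleton.1 hb
  · rintro ⟨g, ⟨h, hg⟩, hf⟩
    have hminors : (g - h • w) ⬝ᵥ M 1 ∈ minors2 M := hM.dotProduct_mem_minors2 (by
      rw [sub_dotProduct, smul_dotProduct, hg, smul_eq_mul, mul_comm, sub_self])
    have hdecomp : f = (g - h • w) ⬝ᵥ M 1 + (f - g ⬝ᵥ M 1) + h * w ⬝ᵥ M 1 := by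
      rw [sub_dotProduct, smul_dotProduct, smul_eq_mul]
      ring
    rw [hdecomp]
    exact Submodule.add_mem_sup
      (Submodule.add_mem_sup hminors (Ideal.mem_span_singleton.2 hf))
      (Ideal.mul_mem_left _ _ (Ideal.mem_span_singleton_self _))

omit [IsDomain R] hx hy in
theorem minors2_cons_zero_sup_span_singleton :
    minors2 (Matrix.of ![Fin.cons p (M 0), Fin.cons 0 (M 1)]) ⊔ Ideal.span {q} =
      minors2 M ⊔ Ideal.span {q} ⊔
        Ideal.span (Set.range (p • Fin.cons q (M 1) : Fin (m + 2) → R)) := by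
  have hrep : repByMinors p 0 (M 0) (M 1) = Ideal.span (Set.range (p • M 1)) := by
    simp only [repByMinors, zero_mul, sub_zero]
    rfl
  have hcons : p • Fin.cons q (M 1) = (Fin.cons (p * q) (p • M 1) : Fin (m + 2) → R) :=
    Matrix.smul_cons p q (M 1)
  have hpq : Ideal.span {p * q} ≤ Ideal.span {q} :=
    Ideal.span_singleton_le_span_singleton.2 (dvd_mul_left q p)
  have hminors : minors2 (Matrix.of ![Fin.cons p (M 0), Fin.cons 0 (M 1)]) =
      minors2 M ⊔ repByMinors p 0 (M 0) (M 1) := minors2_succ _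
  rw [hminors, hrep, hcons, Fin.range_cons, Ideal.span_insert, ← sup_assoc,
    sup_assoc (minors2 M) _ (Ideal.span {p * q}), sup_eq_left.2 hpq, sup_right_comm]

theorem mem_sup_iff_mul_mem_quadricIdeal_of_cons
    (hM : HasKoszulSyzygies (Fin.cons p (M 0) : Fin (m + 2) → R)) (f : R) :
    f ∈ minors2 (Matrix.of ![Fin.cons p (M 0), Fin.cons 0 (M 1)]) ⊔ Ideal.span {q} ↔
      M 0 0 * f ∈ quadricIdeal M p q := by
  let M' : Matrix (Fin 2) (Fin (m + 2)) R := Matrix.of ![Fin.cons p (M 0), Fin.cons 0 (M 1)]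
  have hM'0 (g : Fin (m + 2) → R) : g ⬝ᵥ M' 0 = g 0 * p + Fin.tail g ⬝ᵥ M 0 :=
    Fin.sum_univ_succ _
  have hM'1 (g : Fin (m + 2) → R) : g ⬝ᵥ M' 1 = Fin.tail g ⬝ᵥ M 1 := by
    rw [← zero_add (_ ⬝ᵥ M 1), ← mul_zero (g 0)]
    exact Fin.sum_univ_succ _
  rw [mul_mem_quadricIdeal_iff hx hy]
  constructor
  · intro hf
    obtain ⟨f₀, hf₀, b, hb, rfl⟩ := Submodule.mem_sup.1 hf
    obtain ⟨g, hg, rfl⟩ := exists_dotProduct_eq_of_mem_minors2 (M := M') hf₀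
    rw [hM'0] at hg
    refine ⟨Fin.tail g, ⟨-g 0, by linear_combination hg⟩, ?_⟩
    rw [hM'1, add_sub_cancel_left]
    exact Ideal.mem_span_singleton.1 hb
  · rintro ⟨g, ⟨h, hg⟩, hf⟩
    have hminors := HasKoszulSyzygies.dotProduct_mem_minors2 (M := M') hM (g := Fin.cons (-h) g)
      (by rw [hM'0, Fin.cons_zero, Fin.tail_cons, hg]; ring)
    rw [hM'1, Fin.tail_cons] at hminors
    rw [← add_sub_cancel (g ⬝ᵥ M 1) f]
    exact Submodule.add_mem_sup hminors (Ideal.mem_span_singleton.2 hf)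

end CommRing

section LinearForms

variable {σ K : Type*} [Field K] {m : ℕ} {M : Matrix (Fin 2) (Fin (m + 1)) (MvPolynomial σ K)}
  {p q : MvPolynomial σ K}

theorem OneGeneric.not_dvd (h : OneGeneric K M) (hM : ∀ i j, (M i j).IsHomogeneous 1)
    (j : Fin (m + 1)) : ¬M 0 j ∣ M 1 j := by
  rw [← Ideal.mem_span_singleton, mem_ideal_span_iff_mem_span
    (by simpa using hM 0 j) (hM 1 j), Submodule.mem_span_singleton]
  rintro ⟨c, hc⟩
  have hcomb := (oneGeneric_iff.1 h ![-c, 1] fun h0 => one_ne_zero (congrFun h0 1)).ne_zero j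
  refine hcomb ?_
  simp [Fin.sum_univ_two, hc]

theorem pdLE_quadricIdeal_sup_span_singleton (hM : ∀ i j, (M i j).IsHomogeneous 1)
    (hp : p.IsHomogeneous 1) (hy : ¬M 0 0 ∣ M 1 0) :
    PdLE (MvPolynomial σ K) (m + 2)
      (MvPolynomial σ K ⧸ (quadricIdeal M p q ⊔ Ideal.span {M 0 0})) := by
  have hprime : (Ideal.span {M 0 0}).IsPrime :=
    isPrime_span_of_isHomogeneous_one (by simpa using hM 0 0)
  have hpd := (pdLE_quotient_bot.sup_span_singleton (M 0 0)).mono (show 0 + 1 ≤ m + 1 by omega)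
  rw [bot_sup_eq] at hpd
  rw [quadricIdeal_sup_span_singleton]
  refine PdLE.sup_span_singleton_mul ?_ (mt Ideal.mem_span_singleton.1 hy) hpd
    (pdLE_span_range_of_isHomogeneous_one (Fin.cases hp (hM 0)))
  exact (Ideal.span_singleton_le_iff_mem _).2 (Ideal.subset_span ⟨1, rfl⟩)

theorem OneGeneric.pdLE_quadricIdeal_of_notMem [IsAlgClosed K] (h : OneGeneric K M)
    (hM : ∀ i j, (M i j).IsHomogeneous 1) (hp : p.IsHomogeneous 1) (hq : q.IsHomogeneous 1)
    (hqM : q ∉ Submodule.span K (Set.range (M 0) ∪ Set.range (M 1))) :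
    PdLE (MvPolynomial σ K) (m + 2) (MvPolynomial σ K ⧸ quadricIdeal M p q) := by
  have hx : Prime (M 0 0) :=
    prime_of_isHomogeneous_one (hM 0 0) ((h.linearIndependent_row 0).ne_zero 0)
  have hy := h.not_dvd hM 0
  have hprime := h.isPrime_minors2 hM
  have hP := (h.pdLE_minors2 hM).sup_span_singleton q
  have hPprime := isPrime_minors2_sup_span_singleton hM hprime hq hqM
  have hsum := pdLE_quadricIdeal_sup_span_singleton (q := q) hM hp hy
  by_cases hpM : p ∈ Submodule.span K (Set.range (M 0))
  · obtain ⟨w, rfl⟩ : ∃ w, w ⬝ᵥ M 0 = p := Ideal.mem_span_range_iff_exists_fun.1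
      ((mem_ideal_span_iff_mem_span (Set.forall_mem_range.2 (hM 0)) hp).2 hpM)
    have hK := hasKoszulSyzygies_of_linearIndependent (h.linearIndependent_row 0) (hM 0)
    exact (hP.sup_span_singleton _).quotient_of_colon
      (mem_sup_iff_mul_mem_quadricIdeal_dotProduct hx hy hK w) hsum
  · have hK : HasKoszulSyzygies (Fin.cons p (M 0) : Fin (m + 2) → _) :=
      hasKoszulSyzygies_of_linearIndependent
        (linearIndependent_finCons.2 ⟨h.linearIndependent_row 0, hpM⟩)
        (Fin.cases hp (hM 0))
    refine PdLE.quotient_of_colon (mem_sup_iff_mul_mem_quadricIdeal_of_cons hx hy hK) ?_ hsum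
    rw [minors2_cons_zero_sup_span_singleton]
    refine PdLE.sup_span_range_of_linkage (x := 1) (q := p) (g := Fin.cons q (M 1))
      ((Ideal.ne_top_iff_one _).1 hPprime.ne_top) (fun j => ?_) hP ?_
      (pdLE_span_range_of_isHomogeneous_one (Fin.cases hq (hM 1)))
    · rw [Pi.smul_apply, smul_eq_mul, one_mul, sub_self]
      exact zero_mem _
    · rw [Fin.range_cons, Ideal.span_insert, sup_comm]
      exact sup_le_sup_left (minors2_le_span_range 1) _

theorem pdLE_quadricIdeal_of_mem (hM : ∀ i j, (M i j).IsHomogeneous 1)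
    (hp : p ∈ Submodule.span K (Set.range (M 0) ∪ Set.range (M 1)))
    (hq : q ∈ Submodule.span K (Set.range (M 0) ∪ Set.range (M 1))) :
    PdLE (MvPolynomial σ K) (2 * m + 2) (MvPolynomial σ K ⧸ quadricIdeal M p q) := by
  let s := Set.range (M 0) ∪ Set.range (M 1)
  have hmem (i : Fin 2) (j : Fin (m + 1)) : M i j ∈ Algebra.adjoin K s := by
    refine Algebra.subset_adjoin ?_
    fin_cases i
    exacts [Or.inl ⟨j, rfl⟩, Or.inr ⟨j, rfl⟩]
  have hspan := Algebra.span_le_adjoin K s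
  have hcard : s.ncard ≤ 2 * m + 2 := by
    have hrow (i : Fin 2) : (Set.range (M i)).ncard ≤ m + 1 := by
      rw [← Set.image_univ]
      exact (Set.ncard_image_le Set.finite_univ).trans (by simp)
    exact (Set.ncard_union_le _ _).trans (by linarith [hrow 0, hrow 1])
  refine (pdLE_span_of_subset_adjoin ((Set.finite_range _).union (Set.finite_range _)) ?_
    (Set.range_subset_iff.2 fun j => ?_)).mono hcard
  · rintro _ (⟨j, rfl⟩ | ⟨j, rfl⟩)
    exacts [hM 0 j, hM 1 j]
  · refine sub_mem (mul_mem (hmem 0 0) ?_) (mul_mem (hmem 1 0) ?_)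
    · exact Fin.cases (hspan hq) (Fin.cases (zero_mem _) fun j => hmem 1 j.succ) j
    · exact Fin.cases (zero_mem _) (Fin.cases (hspan hp) fun j => hmem 0 j.succ) j

theorem OneGeneric.pdLE_quadricIdeal [IsAlgClosed K] (h : OneGeneric K M)
    (hM : ∀ i j, (M i j).IsHomogeneous 1) (hp : p.IsHomogeneous 1) (hq : q.IsHomogeneous 1) :
    PdLE (MvPolynomial σ K) (2 * m + 2) (MvPolynomial σ K ⧸ quadricIdeal M p q) := by
  by_cases hqM : q ∈ Submodule.span K (Set.range (M 0) ∪ Set.range (M 1))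
  · by_cases hpM : p ∈ Submodule.span K (Set.range (M 0) ∪ Set.range (M 1))
    · exact pdLE_quadricIdeal_of_mem hM hpM hqM
    · rw [Set.union_comm] at hpM
      rw [← quadricIdeal_submatrix_swap]
      exact ((h.submatrix (Equiv.swap 0 1) Function.injective_id).pdLE_quadricIdeal_of_notMem
        (fun i j => hM _ j) hq hp hpM).mono (by omega)
  · exact (h.pdLE_quadricIdeal_of_notMem hM hp hq hqM).mono (by omega)

end LinearForms

end Quadrics

theorem stmt11_general (σ : Type*) (K : Type*) [Field K] [IsAlgClosed K] (m : ℕ)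
    (x y a₁₂ a₂₁ : MvPolynomial σ K) (hx : x.IsHomogeneous 1) (hy : y.IsHomogeneous 1)
    (ha₁₂ : a₁₂.IsHomogeneous 1) (ha₂₁ : a₂₁.IsHomogeneous 1)
    (u v : Fin m → MvPolynomial σ K)
    (hu : ∀ j, (u j).IsHomogeneous 1) (hv : ∀ j, (v j).IsHomogeneous 1)
    (I : Ideal (MvPolynomial σ K))
    (hI : I = repByMinors x y (Fin.cons 0 (Fin.cons a₁₂ u)) (Fin.cons a₂₁ (Fin.cons 0 v)))
    (h1g : OneGeneric K (Matrix.of ![Fin.cons x u, Fin.cons y v] :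
      Matrix (Fin 2) (Fin (m + 1)) (MvPolynomial σ K))) :
    projDim (MvPolynomial σ K) (MvPolynomial σ K ⧸ I) ≤ ((2 * (m + 2) - 2 : ℕ) : ℕ∞) := by
  subst hI
  exact projDim_le_of_pdLE <| h1g.pdLE_quadricIdeal
    (Fin.forall_fin_two.2 ⟨Fin.cases hx hu, Fin.cases hy hv⟩) ha₁₂ ha₂₁

/-- with `n = m + 2 ≥ 3`, if `I` is generated by `n` quadrics represented
by minors by `M = [[x, 0, a₁₂, a₁₃, …, a₁ₙ], [y, a₂₁, 0, a₂₃, …, a₂ₙ]]` with `x, y`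
linearly independent linear forms and the submatrix `D` obtained by deleting the second
and third columns 1-generic, then `pd(R/I) ≤ 2n - 2`. -/
theorem stmt11 (K : Type u) [Field K] [IsAlgClosed K] (N m : ℕ) (hm : 1 ≤ m)
    (x y a₁₂ a₂₁ : MvPolynomial (Fin N) K) (hx : x.IsHomogeneous 1) (hy : y.IsHomogeneous 1)
    (ha₁₂ : a₁₂.IsHomogeneous 1) (ha₂₁ : a₂₁.IsHomogeneous 1)
    (hxy : LinearIndependent K ![x, y])
    (u v : Fin m → MvPolynomial (Fin N) K)
    (hu : ∀ j, (u j).IsHomogeneous 1) (hv : ∀ j, (v j).IsHomogeneous 1)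
    (I : Ideal (MvPolynomial (Fin N) K))
    (hI : I = repByMinors x y (Fin.cons 0 (Fin.cons a₁₂ u)) (Fin.cons a₂₁ (Fin.cons 0 v)))
    (h1g : OneGeneric K (Matrix.of ![Fin.cons x u, Fin.cons y v] : Matrix (Fin 2) (Fin (m + 1)) (MvPolynomial (Fin N) K))) :
    projDim (MvPolynomial (Fin N) K) (MvPolynomial (Fin N) K ⧸ I) ≤ ((2 * (m + 2) - 2 : ℕ) : ℕ∞) :=
  stmt11_general (Fin N) K m x y a₁₂ a₂₁ hx hy ha₁₂ ha₂₁ u v hu hv I hI h1g
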